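/- Let p > 3 be a prime. (i) If k ∈ F_p is a nonsquare and 12 divides p + 1, then P(x) = x³ − kx is not a Sidon polynomial over F_p × F_p. (ii) If 12 does not divide p − 1, then P(x) = x³ − x is not a Sidon polynomial over F_p × F_p. -/

import Mathlib

open Polynomial

/-- A subset `A` of an abelian group is a Sidon set if whenever
`a₁ - a₂ = a₃ - a₄` with all four elements in `A`, then `{a₁, a₄} = {a₂, a₃}`. -/
def IsSidon {G : Type*} [AddCommGroup G] (A : Set G) : Prop :=
  ∀ a₁ ∈ A, ∀ a₂ ∈ A, ∀ a₃ ∈ A, ∀ a₄ ∈ A,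
    a₁ - a₂ = a₃ - a₄ → ({a₁, a₄} : Set G) = {a₂, a₃}

/-- The set `(P,Q) = {(P(x), Q(x)) : x ∈ F}`. -/
def polyGraph {F : Type*} [Field F] (P Q : F[X]) : Set (F × F) :=
  Set.range fun x : F => (P.eval x, Q.eval x)

/-- A maximum Sidon set over `F × F`: a Sidon set with exactly `|F|` elements. -/
def IsMaxSidon {F : Type*} [Field F] [Fintype F] (A : Set (F × F)) : Prop :=
  IsSidon A ∧ A.ncard = Fintype.card F

/-- A polynomial `P` is Sidon if there is `Q` with `(P,Q)` a maximum Sidon set. -/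
def IsSidonPoly {F : Type*} [Field F] [Fintype F] (P : F[X]) : Prop :=
  ∃ Q : F[X], IsMaxSidon (polyGraph P Q)

/-- A permutation polynomial: its evaluation map is a bijection of `F`. -/
def IsPermPoly {F : Type*} [Field F] (R : F[X]) : Prop :=
  Function.Bijective fun x : F => R.eval x

/-- Sidon equivalence: `P' = R ∘ P ∘ T` (as functions on `F`)
for permutation polynomials `R`, `T`. -/
def SidonEquiv {F : Type*} [Field F] (P P' : F[X]) : Prop :=
  ∃ R T : F[X], IsPermPoly R ∧ IsPermPoly T ∧
    ∀ x : F, P'.eval x = R.eval (P.eval (T.eval x))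
open Finset

/-- The number of pairs `(x, y)` with `f x - f y = h`. -/
def diffCount {F : Type*} [Field F] [Fintype F] [DecidableEq F] (f : F → F) (h : F) : ℕ :=
  #{z : F × F | f z.1 - f z.2 = h}

/-- A polynomial whose value at `h` is `-diffCount f h` modulo `p`. -/
noncomputable def diffPoly {p : ℕ} [Fact p.Prime] (f : ZMod p → ZMod p) : (ZMod p)[X] :=
  ∑ z : ZMod p × ZMod p, (X + C (f z.2 - f z.1)) ^ (p - 1)

section Sidon

variable {F : Type*} [Field F] [Fintype F] {P Q : F[X]}

theorem IsMaxSidon.injective (hPQ : IsMaxSidon (polyGraph P Q)) :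
    Function.Injective fun x : F => (P.eval x, Q.eval x) := by
  have h := hPQ.2
  rw [polyGraph, ← Set.image_univ, ← Nat.card_eq_fintype_card, ← Set.ncard_univ,
    Set.ncard_image_iff] at h
  exact Set.injOn_univ.1 h

theorem IsMaxSidon.injOn_sub (hPQ : IsMaxSidon (polyGraph P Q)) :
    Set.InjOn (fun z : F × F => (P.eval z.1 - P.eval z.2, Q.eval z.1 - Q.eval z.2))
      {z | z.1 ≠ z.2} := by
  rintro ⟨x, y⟩ hxy ⟨u, v⟩ - heq
  have hxu : x = u := by
    have h := hPQ.1 _ ⟨x, rfl⟩ _ ⟨y, rfl⟩ _ ⟨u, rfl⟩ _ ⟨v, rfl⟩ heq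
    have hmem : (P.eval x, Q.eval x) ∈
        ({(P.eval y, Q.eval y), (P.eval u, Q.eval u)} : Set (F × F)) := by
      rw [← h]; exact Set.mem_insert _ _
    rcases hmem with h | h
    · exact absurd (hPQ.injective h) hxy
    · exact hPQ.injective h
  subst hxu
  have hyv : y = v := by
    apply hPQ.injective
    simpa using heq
  rw [hyv]

variable [DecidableEq F]

theorem IsMaxSidon.diffCount_le (hPQ : IsMaxSidon (polyGraph P Q)) {h : F} (hh : h ≠ 0) :
    diffCount (fun x => P.eval x) h ≤ Fintype.card F := by
  refine card_le_card_of_injOn (t := univ) (fun z => Q.eval z.1 - Q.eval z.2) (by simp) ?_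
  intro z hz w hw hzw
  simp only [coe_filter, mem_univ, true_and, Set.mem_ofPred_eq] at hz hw
  have hne : ∀ u : F × F, P.eval u.1 - P.eval u.2 = h → u.1 ≠ u.2 := by
    intro u hu huu
    rw [huu, sub_self] at hu
    exact hh hu.symm
  exact hPQ.injOn_sub (hne z hz) (hne w hw) (Prod.ext (hz.trans hw.symm) hzw)

theorem IsMaxSidon.diffCount_zero_lt (hPQ : IsMaxSidon (polyGraph P Q)) :
    diffCount (fun x => P.eval x) 0 < 2 * Fintype.card F := by
  have hdiag : #{z : F × F | P.eval z.1 - P.eval z.2 = 0 ∧ z.1 = z.2} ≤ Fintype.card F := by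
    refine card_le_card_of_injOn (t := univ) Prod.fst (by simp) ?_
    rintro ⟨x, y⟩ hz ⟨u, v⟩ hw hzw
    simp_all
  have hoff : #{z : F × F | P.eval z.1 - P.eval z.2 = 0 ∧ ¬ z.1 = z.2} ≤
      #(univ.erase (0 : F)) := by
    refine card_le_card_of_injOn (fun z => Q.eval z.1 - Q.eval z.2) ?_ ?_
    · intro z hz
      simp only [coe_filter, mem_univ, true_and, Set.mem_ofPred_eq] at hz
      simp only [coe_erase, coe_univ, Set.mem_sdiff, Set.mem_univ, true_and,
        Set.mem_singleton_iff]
      exact fun h => hz.2 (hPQ.injective (Prod.ext (sub_eq_zero.1 hz.1) (sub_eq_zero.1 h)))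
    · intro z hz w hw hzw
      simp only [coe_filter, mem_univ, true_and, Set.mem_ofPred_eq] at hz hw
      exact hPQ.injOn_sub hz.2 hw.2 (Prod.ext (hz.1.trans hw.1.symm) hzw)
  rw [card_erase_of_mem (mem_univ _), card_univ] at hoff
  have hsplit := card_filter_add_card_filter_not
    (s := ({z : F × F | P.eval z.1 - P.eval z.2 = 0} : Finset (F × F))) (fun z => z.1 = z.2)
  rw [filter_filter, filter_filter] at hsplit
  have := Fintype.card_pos (α := F)
  rw [diffCount]
  lia

theorem sum_diffCount (f : F → F) : ∑ h, diffCount f h = Fintype.card F ^ 2 := by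
  have := card_eq_sum_card_fiberwise (s := (univ : Finset (F × F))) (t := univ)
    (f := fun z => f z.1 - f z.2) (by simp)
  rw [card_univ, Fintype.card_prod] at this
  rw [sq, this]
  rfl

end Sidon

section DiffPoly

variable {p : ℕ} [Fact p.Prime]

theorem eval_diffPoly (f : ZMod p → ZMod p) (h : ZMod p) :
    (diffPoly f).eval h = -(diffCount f h : ZMod p) := by
  have hp := (Fact.out : p.Prime).one_lt
  have hterm : ∀ z : ZMod p × ZMod p, ((X + C (f z.2 - f z.1)) ^ (p - 1)).eval h =
      1 - if f z.1 - f z.2 = h then 1 else 0 := by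
    intro z
    simp only [eval_pow, eval_add, eval_X, eval_C]
    split_ifs with hz
    · rw [← hz, sub_add_sub_cancel, sub_self, zero_pow (by omega), sub_self]
    · rw [ZMod.pow_card_sub_one_eq_one, sub_zero]
      intro h0
      exact hz (by linear_combination -h0)
  rw [diffPoly, eval_finsetSum, sum_congr rfl fun z _ => hterm z]
  simp [diffCount]

theorem sum_sub_pow (f : ZMod p → ZMod p) (n : ℕ) :
    ∑ z : ZMod p × ZMod p, (f z.2 - f z.1) ^ n =
      ∑ i ∈ range (n + 1),
        (-1) ^ (n - i) * (n.choose i : ZMod p) * (∑ x, f x ^ i) * ∑ x, f x ^ (n - i) := by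
  simp_rw [sub_eq_add_neg, add_pow]
  rw [sum_comm]
  refine sum_congr rfl fun i _ => ?_
  rw [Fintype.sum_prod_type_right, mul_assoc, sum_mul_sum, mul_sum]
  refine sum_congr rfl fun x _ => ?_
  rw [mul_sum]
  refine sum_congr rfl fun y _ => ?_
  rw [neg_pow (f y)]
  ring

theorem coeff_diffPoly (f : ZMod p → ZMod p) (j : ℕ) :
    (diffPoly f).coeff j =
      (∑ z : ZMod p × ZMod p, (f z.2 - f z.1) ^ (p - 1 - j)) * ((p - 1).choose j : ZMod p) := by
  rw [diffPoly, finsetSum_coeff, sum_mul]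
  simp_rw [coeff_X_add_C_pow]

variable {f : ZMod p → ZMod p} {e : ℕ}

theorem natDegree_diffPoly_le (hf : ∀ i < e, ∑ x, f x ^ i = 0) :
    (diffPoly f).natDegree ≤ p - 1 - 2 * e := by
  refine natDegree_le_iff_coeff_eq_zero.2 fun j hj => ?_
  rw [coeff_diffPoly]
  by_cases hjp : p - 1 < j
  · simp [Nat.choose_eq_zero_of_lt hjp]
  rw [sum_sub_pow, sum_eq_zero, zero_mul]
  intro i hi
  rw [mem_range] at hi
  by_cases hie : i < e
  · rw [hf i hie]; ring
  · rw [hf (p - 1 - j - i) (by omega)]; ring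

theorem natCast_choose_ne_zero {n : ℕ} (hn : n < p) {i : ℕ} (hi : i ≤ n) :
    (n.choose i : ZMod p) ≠ 0 := by
  rw [Ne, ZMod.natCast_eq_zero_iff]
  intro h
  have h2 : p ∣ n.factorial := by
    rw [← Nat.choose_mul_factorial_mul_factorial hi, mul_assoc]
    exact h.mul_right _
  exact absurd ((Fact.out : p.Prime).dvd_factorial.1 h2) (by omega)

theorem coeff_diffPoly_ne_zero (he : 2 * e ≤ p - 1) (hf : ∀ i < e, ∑ x, f x ^ i = 0)
    (hfe : ∑ x, f x ^ e ≠ 0) : (diffPoly f).coeff (p - 1 - 2 * e) ≠ 0 := by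
  have hp := (Fact.out : p.Prime).one_lt
  rw [coeff_diffPoly, sum_sub_pow, show p - 1 - (p - 1 - 2 * e) = 2 * e by omega,
    sum_eq_single e, show 2 * e - e = e by omega]
  · refine mul_ne_zero (mul_ne_zero (mul_ne_zero (mul_ne_zero ?_ ?_) hfe) hfe) ?_
    · exact pow_ne_zero _ (neg_ne_zero.2 one_ne_zero)
    · exact natCast_choose_ne_zero (by omega) (by omega)
    · exact natCast_choose_ne_zero (by omega) (by omega)
  · intro i hi hne
    rw [mem_range] at hi
    by_cases hie : i < e
    · rw [hf i hie]; ring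
    · rw [hf (2 * e - i) (by omega)]; ring
  · intro h
    exact absurd (mem_range.2 (by omega)) h

/-- If every `diffCount f h` with `h ≠ 0` is at most `p`, their total deficiency is bounded below
in terms of the number of zeros of `diffPoly f` and of `diffPoly f - 1`. -/
theorem deficiency_lower_bound (hle : ∀ h ≠ 0, diffCount f h ≤ p) :
    2 * (p - 1) + p ≤ diffCount f 0 + 2 * #{h : ZMod p | h ≠ 0 ∧ (diffPoly f).eval h = 0} +
      #{h : ZMod p | h ≠ 0 ∧ (diffPoly f).eval h = 1} := by
  have hp := (Fact.out : p.Prime).one_lt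
  have hpt : ∀ h ∈ univ.erase (0 : ZMod p), 2 + diffCount f h ≤
      p + 2 * (if (diffPoly f).eval h = 0 then 1 else 0) +
        if (diffPoly f).eval h = 1 then 1 else 0 := by
    intro h hh
    have hM := hle h (ne_of_mem_erase hh)
    rw [eval_diffPoly]
    rcases Nat.lt_or_ge (diffCount f h + 1) p with h2 | h2
    · omega
    rcases (by omega : diffCount f h = p ∨ diffCount f h = p - 1) with h1 | h1
    · simp only [h1, CharP.cast_eq_zero, neg_zero, if_true]
      omega
    · rw [h1, Nat.cast_sub hp.le]
      simp only [CharP.cast_eq_zero, Nat.cast_one, zero_sub, neg_neg, if_true]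
      omega
  have hsum := sum_le_sum hpt
  have htot := sum_diffCount f
  rw [← add_sum_erase _ _ (mem_univ (0 : ZMod p)), ZMod.card] at htot
  simp only [sum_add_distrib, sum_const, ← mul_sum, sum_boole, card_erase_of_mem (mem_univ _),
    card_univ, ZMod.card, smul_eq_mul, Nat.cast_id] at hsum
  have hfilter : ∀ c : ZMod p, #{h ∈ univ.erase (0 : ZMod p) | (diffPoly f).eval h = c} =
      #{h : ZMod p | h ≠ 0 ∧ (diffPoly f).eval h = c} := by
    intro c
    congr 1
    ext h
    simp
  rw [hfilter, hfilter] at hsum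
  obtain ⟨q, rfl⟩ : ∃ q, p = q + 1 := ⟨p - 1, by omega⟩
  simp only [Nat.add_sub_cancel] at hsum ⊢
  nlinarith

theorem card_eval_eq_le {R : (ZMod p)[X]} (hR : 0 < R.natDegree) (c : ZMod p)
    {s : Finset (ZMod p)} (hs : ∀ h ∈ s, R.eval h = c) : #s ≤ R.natDegree := by
  rw [← natDegree_sub_C (a := c)]
  refine card_le_degree_of_subset_roots fun h hh => ?_
  rw [mem_roots', IsRoot]
  refine ⟨?_, by simp [hs h hh]⟩
  rintro h0
  rw [← natDegree_sub_C (a := c), h0, natDegree_zero] at hR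
  exact hR.false

/-- The counts `diffCount f h` cannot all obey the Sidon bounds when the first nonvanishing power
sum of `f` has exponent `e` in the given range. -/
theorem false_of_diffCount_le (he : 2 * e < p - 1) (he3 : p - 1 ≤ 3 * e)
    (hf : ∀ i < e, ∑ x, f x ^ i = 0) (hfe : ∑ x, f x ^ e ≠ 0)
    (hle : ∀ h ≠ 0, diffCount f h ≤ p) (hzero : diffCount f 0 < 2 * p) : False := by
  have hp := (Fact.out : p.Prime).one_lt
  have hdeg : (diffPoly f).natDegree = p - 1 - 2 * e :=
    natDegree_eq_of_le_of_coeff_ne_zero (natDegree_diffPoly_le hf)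
      (coeff_diffPoly_ne_zero he.le hf hfe)
  have hpos : 0 < (diffPoly f).natDegree := by omega
  have hbound := deficiency_lower_bound hle
  have h0 : #{h : ZMod p | h ≠ 0 ∧ (diffPoly f).eval h = 0} ≤ (diffPoly f).natDegree :=
    card_eval_eq_le hpos 0 fun h hh => (mem_filter.1 hh).2.2
  have h1 : #{h : ZMod p | h ≠ 0 ∧ (diffPoly f).eval h = 1} ≤ (diffPoly f).natDegree :=
    card_eval_eq_le hpos 1 fun h hh => (mem_filter.1 hh).2.2
  have hlast : diffCount f 0 = 2 * p - 1 := by omega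
  have h1_insert : #(insert 0 ({h : ZMod p | h ≠ 0 ∧ (diffPoly f).eval h = 1} : Finset (ZMod p))) ≤
      (diffPoly f).natDegree := by
    refine card_eval_eq_le hpos 1 fun h hh => ?_
    rcases mem_insert.1 hh with rfl | hh
    · rw [eval_diffPoly, hlast, Nat.cast_sub (by omega)]
      simp
    · exact (mem_filter.1 hh).2.2
  rw [card_insert_of_notMem (by simp)] at h1_insert
  omega

end DiffPoly

section Cubic

variable {p : ℕ} [Fact p.Prime]

theorem sum_pow_card_sub_one : ∑ x : ZMod p, x ^ (p - 1) = -1 := by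
  have hp := (Fact.out : p.Prime).one_lt
  rw [← add_sum_erase _ _ (mem_univ (0 : ZMod p)),
    sum_congr rfl fun x hx => ZMod.pow_card_sub_one_eq_one (ne_of_mem_erase hx)]
  simp [zero_pow (show p - 1 ≠ 0 by omega), card_erase_of_mem, Nat.cast_sub hp.le]

theorem sum_cubic_pow (k : ZMod p) (n : ℕ) :
    ∑ x : ZMod p, (x ^ 3 - k * x) ^ n =
      ∑ m ∈ range (n + 1), (n.choose m : ZMod p) * (-k) ^ (n - m) *
        ∑ x : ZMod p, x ^ (n + 2 * m) := by
  simp_rw [sub_eq_add_neg, add_pow]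
  rw [sum_comm]
  refine sum_congr rfl fun m hm => ?_
  rw [mul_sum]
  refine sum_congr rfl fun x _ => ?_
  obtain ⟨r, rfl⟩ := Nat.exists_eq_add_of_le (Nat.lt_succ_iff.1 (mem_range.1 hm))
  rw [Nat.add_sub_cancel_left, ← neg_mul, mul_pow, ← pow_mul]
  ring

theorem sum_cubic_pow_eq_zero (k : ZMod p) {n : ℕ} (hn : 3 * n < p - 1) :
    ∑ x : ZMod p, (x ^ 3 - k * x) ^ n = 0 := by
  rw [sum_cubic_pow]
  refine sum_eq_zero fun m hm => ?_
  rw [mem_range] at hm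
  rw [FiniteField.sum_pow_lt_card_sub_one _ _ (by rw [ZMod.card]; omega), mul_zero]

theorem sum_cubic_pow_of_three_mul_eq (k : ZMod p) {n : ℕ} (hn : 3 * n = p - 1) :
    ∑ x : ZMod p, (x ^ 3 - k * x) ^ n = -1 := by
  rw [sum_cubic_pow, sum_range_succ, sum_eq_zero, show n + 2 * n = p - 1 by omega,
    sum_pow_card_sub_one]
  · simp
  · intro m hm
    rw [mem_range] at hm
    rw [FiniteField.sum_pow_lt_card_sub_one _ _ (by rw [ZMod.card]; omega), mul_zero]

theorem sum_cubic_pow_of_three_mul_eq_add_two (hp : 3 < p) (k : ZMod p) {n : ℕ}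
    (hn : 3 * n = p - 1 + 2) : ∑ x : ZMod p, (x ^ 3 - k * x) ^ n = n * k := by
  obtain ⟨r, rfl⟩ : ∃ r, n = r + 1 := ⟨n - 1, by omega⟩
  have htop : ∑ x : ZMod p, x ^ (r + 1 + 2 * (r + 1)) = 0 := by
    rw [← FiniteField.sum_pow_lt_card_sub_one (ZMod p) 2 (by rw [ZMod.card]; omega)]
    refine sum_congr rfl fun x _ => ?_
    rw [show r + 1 + 2 * (r + 1) = p + 1 by omega, pow_succ, ZMod.pow_card, sq]
  rw [sum_cubic_pow, sum_range_succ, sum_range_succ, sum_eq_zero, htop,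
    show r + 1 + 2 * r = p - 1 by omega, sum_pow_card_sub_one]
  · simp
  · intro m hm
    rw [mem_range] at hm
    rw [FiniteField.sum_pow_lt_card_sub_one _ _ (by rw [ZMod.card]; omega), mul_zero]

/-- For `p > 5` no cubic `x³ - kx` with `k ≠ 0` is a Sidon polynomial. -/
theorem not_isSidonPoly_cubic (hp : 5 < p) {k : ZMod p} (hk : k ≠ 0) :
    ¬ IsSidonPoly ((X : (ZMod p)[X]) ^ 3 - C k * X) := by
  rintro ⟨Q, hQ⟩
  have hle : ∀ h ≠ 0, diffCount (fun x : ZMod p => x ^ 3 - k * x) h ≤ p := fun h hh => by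
    simpa using hQ.diffCount_le hh
  have hzero : diffCount (fun x : ZMod p => x ^ 3 - k * x) 0 < 2 * p := by
    simpa using hQ.diffCount_zero_lt
  have hprime : p.Prime := Fact.out
  have h3 : p % 3 ≠ 0 := fun h => by
    have := (Nat.prime_dvd_prime_iff_eq Nat.prime_three hprime).1 (Nat.dvd_of_mod_eq_zero h)
    omega
  rcases (by omega : p % 3 = 1 ∨ p % 3 = 2) with h | h
  · have hn : 3 * ((p - 1) / 3) = p - 1 := by omega
    refine false_of_diffCount_le (e := (p - 1) / 3) (by omega) hn.ge
      (fun i hi => sum_cubic_pow_eq_zero k (by omega)) ?_ hle hzero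
    rw [sum_cubic_pow_of_three_mul_eq k hn]
    exact neg_ne_zero.2 one_ne_zero
  · have hn : 3 * ((p + 1) / 3) = p - 1 + 2 := by omega
    have h2 : p % 2 = 1 := hprime.eq_two_or_odd.resolve_left (by omega)
    refine false_of_diffCount_le (e := (p + 1) / 3) (by omega) (by omega)
      (fun i hi => sum_cubic_pow_eq_zero k (by omega)) ?_ hle hzero
    rw [sum_cubic_pow_of_three_mul_eq_add_two (by omega) k hn]
    refine mul_ne_zero ?_ hk
    rw [Ne, ZMod.natCast_eq_zero_iff]
    exact Nat.not_dvd_of_pos_of_lt (by omega) (by omega)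

end Cubic

theorem card_cubic_zmod_five :
    #{z : ZMod 5 × ZMod 5 | z.1 ^ 3 - z.1 - (z.2 ^ 3 - z.2) = 0} = 11 := by decide

theorem not_isSidonPoly_cubic_zmod_five [Fact (Nat.Prime 5)] :
    ¬ IsSidonPoly ((X : (ZMod 5)[X]) ^ 3 - X) := by
  rintro ⟨Q, hQ⟩
  have hzero : diffCount (fun x : ZMod 5 => x ^ 3 - x) 0 < 2 * 5 := by
    simpa using hQ.diffCount_zero_lt
  exact absurd (card_cubic_zmod_five.ge.trans_lt hzero) (by norm_num)

/-- for a prime `p > 3`: (i) if `k` is a nonsquare and `12 ∣ p + 1`,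
then `x³ - kx` is not Sidon; (ii) if `12 ∤ p - 1`, then `x³ - x` is not Sidon. -/
theorem stmt_17 (p : ℕ) [Fact p.Prime] (hp : 3 < p) :
    (∀ k : ZMod p, (¬ ∃ y : ZMod p, y ^ 2 = k) → 12 ∣ p + 1 →
      ¬ IsSidonPoly ((X : (ZMod p)[X]) ^ 3 - C k * X)) ∧
    (¬ 12 ∣ p - 1 → ¬ IsSidonPoly ((X : (ZMod p)[X]) ^ 3 - X)) := by
  constructor
  · intro k hk h12
    refine not_isSidonPoly_cubic (by omega) ?_
    rintro rfl
    exact hk ⟨0, by simp⟩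
  · intro _
    rcases Nat.lt_or_ge 5 p with h5 | h5
    · simpa using not_isSidonPoly_cubic h5 (one_ne_zero (α := ZMod p))
    · have hprime : p.Prime := Fact.out
      obtain rfl : p = 5 := by
        have h2 := hprime.eq_two_or_odd
        omega
      exact not_isSidonPoly_cubic_zmod_five
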